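/- Let ζ_p ⊂ Y_p be (the lift to the warped product M = M₄ ×_f Y of) a compact submanifold ζ ⊂ Y, and let n^μ = (n^a, n^i) be a future-pointing normal to ζ_p at q ∈ ζ_p. Then the expansion of ζ_p in (M,g) along n equals θ(n) = θ̄_{n̄} + (D−m) f⁻¹ n^a ∂_a f |_p, where θ̄_{n̄} = ḡ_{ij} H̄^i n^j is the expansion of ζ_p as a submanifold of (Y_p, ḡ) along the fiber component n̄, H̄ being the mean curvature vector of ζ_p in (Y_p, ḡ), m the co-dimension of ζ_p in M, and D = dim M. -/

import Mathlib

open Filter MeasureTheory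
open scoped BigOperators Topology

noncomputable section

namespace Paper

variable {ι : Type*} [Fintype ι] [DecidableEq ι]
variable {κ : Type*} [Fintype κ] [DecidableEq κ]

/-- Coordinate partial derivative of a scalar field in the direction `ρ`. -/
def pd (h : (ι → ℝ) → ℝ) (ρ : ι) (x : ι → ℝ) : ℝ :=
  fderiv ℝ h x (Pi.single ρ 1)

/-- The inverse metric. -/
def ginv (g : (ι → ℝ) → Matrix ι ι ℝ) (x : ι → ℝ) : Matrix ι ι ℝ :=
  (g x)⁻¹

/-- Christoffel symbols `Γ^μ_{ρσ} = ½ g^{μν}(∂_ρ g_{νσ} + ∂_σ g_{νρ} − ∂_ν g_{ρσ})`. -/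
def Γc (g : (ι → ℝ) → Matrix ι ι ℝ) (μ ρ σ : ι) (x : ι → ℝ) : ℝ :=
  (1 / 2) * ∑ ν, ginv g x μ ν *
    (pd (fun y => g y ν σ) ρ x + pd (fun y => g y ν ρ) σ x - pd (fun y => g y ρ σ) ν x)

/-- Riemann curvature tensor `R^α_{βμν}`. -/
def Riem (g : (ι → ℝ) → Matrix ι ι ℝ) (α β μ ν : ι) (x : ι → ℝ) : ℝ :=
  pd (Γc g α ν β) μ x - pd (Γc g α μ β) ν x
    + ∑ lam, Γc g α μ lam x * Γc g lam ν β x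
    - ∑ lam, Γc g α ν lam x * Γc g lam μ β x

/-- Riemann tensor with the first index lowered, `R_{μνρσ} = g_{μλ} R^λ_{νρσ}`. -/
def RiemLow (g : (ι → ℝ) → Matrix ι ι ℝ) (μ ν ρ σ : ι) (x : ι → ℝ) : ℝ :=
  ∑ lam, g x μ lam * Riem g lam ν ρ σ x

/-- Ricci tensor `R_{μν} = R^ρ_{μρν}`. -/
def Ric (g : (ι → ℝ) → Matrix ι ι ℝ) (μ ν : ι) (x : ι → ℝ) : ℝ :=
  ∑ ρ, Riem g ρ μ ρ ν x

/-- Scalar product of two vectors with respect to the metric at `x`. -/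
def sq (g : (ι → ℝ) → Matrix ι ι ℝ) (x : ι → ℝ) (v w : ι → ℝ) : ℝ :=
  ∑ μ, ∑ ν, g x μ ν * v μ * w ν

/-- Velocity (tangent vector field) of a parametrized curve. -/
def vel (γ : ℝ → ι → ℝ) (u : ℝ) : ι → ℝ :=
  fun μ => deriv (fun w => γ w μ) u

/-- Covariant derivative, along the curve `γ`, of a vector field `V` given along `γ`. -/
def covD (g : (ι → ℝ) → Matrix ι ι ℝ) (γ V : ℝ → ι → ℝ) (u : ℝ) (μ : ι) : ℝ :=
  deriv (fun w => V w μ) u + ∑ ρ, ∑ σ, Γc g μ ρ σ (γ u) * vel γ u ρ * V u σ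

/-- The (affinely parametrized) geodesic equation at parameter value `u`. -/
def GeodesicAt (g : (ι → ℝ) → Matrix ι ι ℝ) (γ : ℝ → ι → ℝ) (u : ℝ) : Prop :=
  ∀ μ, covD g γ (vel γ) u μ = 0

/-- `γ` is an affinely parametrized geodesic of `g`. -/
def IsGeodesic (g : (ι → ℝ) → Matrix ι ι ℝ) (γ : ℝ → ι → ℝ) : Prop :=
  ∀ u, GeodesicAt g γ u

/-- `E` is parallelly transported along `γ`. -/
def IsParallel (g : (ι → ℝ) → Matrix ι ι ℝ) (γ E : ℝ → ι → ℝ) : Prop :=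
  ∀ u μ, covD g γ E u μ = 0

def SmoothCurve (γ : ℝ → ι → ℝ) : Prop :=
  ∀ μ, ContDiff ℝ (⊤ : ℕ∞) fun u => γ u μ

/-- A smooth symmetric everywhere-nondegenerate metric. -/
def SmoothMetric (g : (ι → ℝ) → Matrix ι ι ℝ) : Prop :=
  (∀ μ ν, ContDiff ℝ (⊤ : ℕ∞) fun x => g x μ ν) ∧
    (∀ x μ ν, g x μ ν = g x ν μ) ∧ ∀ x, IsUnit (g x).det

/-- Lorentzian signature `(−,+,…,+)`: there is a timelike vector whose `g`-orthogonal
complement is positive definite. -/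
def Lorentzian (g : (ι → ℝ) → Matrix ι ι ℝ) : Prop :=
  SmoothMetric g ∧
    ∀ x, ∃ t : ι → ℝ, sq g x t t < 0 ∧ ∀ v : ι → ℝ, sq g x t v = 0 → v ≠ 0 → 0 < sq g x v v

/-- Riemannian (positive definite) metric. -/
def Riemannian (g : (ι → ℝ) → Matrix ι ι ℝ) : Prop :=
  SmoothMetric g ∧ ∀ x, ∀ v : ι → ℝ, v ≠ 0 → 0 < sq g x v v

def NullVec (g : (ι → ℝ) → Matrix ι ι ℝ) (x v : ι → ℝ) : Prop :=
  sq g x v v = 0 ∧ v ≠ 0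

/-- A time orientation: an everywhere timelike vector field. -/
def TimeOrientation (g : (ι → ℝ) → Matrix ι ι ℝ) (T : (ι → ℝ) → ι → ℝ) : Prop :=
  ∀ x, sq g x (T x) (T x) < 0

/-- `v` is a future-pointing causal vector at `x` (wrt the time orientation `T`). -/
def FutureCausal (g : (ι → ℝ) → Matrix ι ι ℝ) (T : (ι → ℝ) → ι → ℝ) (x v : ι → ℝ) : Prop :=
  sq g x v v ≤ 0 ∧ v ≠ 0 ∧ sq g x (T x) v < 0

/-- `S` is met exactly once by every inextendible future-directed causal curve
(inextendibility being encoded by parametrization by Euclidean arclength on all of `ℝ`). -/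
def IsCauchySurface (g : (ι → ℝ) → Matrix ι ι ℝ) (T : (ι → ℝ) → ι → ℝ)
    (S : Set (ι → ℝ)) : Prop :=
  ∀ γ : ℝ → ι → ℝ, (∀ μ, Differentiable ℝ fun u => γ u μ) →
    (∀ u, FutureCausal g T (γ u) (vel γ u)) →
    (∀ u, ∑ μ, (vel γ u μ) ^ 2 = 1) → ∃! u, γ u ∈ S

/-- `g`-gradient vector of a scalar function. -/
def gradVec (g : (ι → ℝ) → Matrix ι ι ℝ) (τ : (ι → ℝ) → ℝ) (x : ι → ℝ) : ι → ℝ :=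
  fun μ => ∑ ν, ginv g x μ ν * pd τ ν x

/-- Existence of a non-compact (spacelike) Cauchy hypersurface, encoded as a regular
level set of a smooth function with timelike gradient. -/
def HasNoncompactCauchySurface (g : (ι → ℝ) → Matrix ι ι ℝ)
    (T : (ι → ℝ) → ι → ℝ) : Prop :=
  ∃ τ : (ι → ℝ) → ℝ, ContDiff ℝ (⊤ : ℕ∞) τ ∧ ¬ IsCompact {x | τ x = 0} ∧
    (∀ x, τ x = 0 → sq g x (gradVec g τ x) (gradVec g τ x) < 0) ∧
    IsCauchySurface g T {x | τ x = 0}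

/-- Null geodesic completeness: every null initial datum extends to a geodesic
defined for all values of the affine parameter. -/
def NullComplete (g : (ι → ℝ) → Matrix ι ι ℝ) : Prop :=
  ∀ x v : ι → ℝ, NullVec g x v →
    ∃ γ : ℝ → ι → ℝ, SmoothCurve γ ∧ γ 0 = x ∧ vel γ 0 = v ∧ IsGeodesic g γ

/-- Future null geodesic completeness. -/
def FutureNullComplete (g : (ι → ℝ) → Matrix ι ι ℝ) (T : (ι → ℝ) → ι → ℝ) : Prop :=
  ∀ x v : ι → ℝ, NullVec g x v → FutureCausal g T x v →
    ∃ γ : ℝ → ι → ℝ, SmoothCurve γ ∧ γ 0 = x ∧ vel γ 0 = v ∧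
      ∀ u, 0 ≤ u → GeodesicAt g γ u

/-! ### Submanifolds given implicitly as regular zero sets -/

/-- Differential (lowered normal covectors) of the defining map `F`. -/
def dFm (F : (ι → ℝ) → κ → ℝ) (α : κ) (μ : ι) (x : ι → ℝ) : ℝ :=
  pd (fun y => F y α) μ x

/-- The normal vectors `ν_α = grad F^α` spanning the normal space. -/
def normalBasis (g : (ι → ℝ) → Matrix ι ι ℝ) (F : (ι → ℝ) → κ → ℝ) (α : κ)
    (x : ι → ℝ) : ι → ℝ :=
  fun μ => ∑ ν, ginv g x μ ν * dFm F α ν x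

/-- Gram matrix `W_{αβ} = g(ν_α, ν_β)` of the normals. -/
def gram (g : (ι → ℝ) → Matrix ι ι ℝ) (F : (ι → ℝ) → κ → ℝ) (x : ι → ℝ) :
    Matrix κ κ ℝ :=
  Matrix.of fun α β => ∑ μ, dFm F α μ x * normalBasis g F β x μ

/-- The (contravariant) orthogonal projector onto the tangent space of `{F = 0}`. -/
def tanProj (g : (ι → ℝ) → Matrix ι ι ℝ) (F : (ι → ℝ) → κ → ℝ) (x : ι → ℝ)
    (μ ν : ι) : ℝ :=
  ginv g x μ ν -
    ∑ α, ∑ β, (gram g F x)⁻¹ α β * normalBasis g F α x μ * normalBasis g F β x ν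

/-- Covariant Hessian `∇_μ ∇_ν F^α`. -/
def hessF (g : (ι → ℝ) → Matrix ι ι ℝ) (F : (ι → ℝ) → κ → ℝ) (α : κ) (μ ν : ι)
    (x : ι → ℝ) : ℝ :=
  pd (fun y => dFm F α ν y) μ x - ∑ lam, Γc g lam μ ν x * dFm F α lam x

/-- The expansion `θ(n)` of the submanifold `{F = 0}` along the normal
`n = ∑ c_α ν_α`, namely `θ(n) = ∑_α c_α h^{μν} ∇_μ∇_ν F^α`. -/
def expansionCoeff (g : (ι → ℝ) → Matrix ι ι ℝ) (F : (ι → ℝ) → κ → ℝ) (x : ι → ℝ)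
    (c : κ → ℝ) : ℝ :=
  ∑ α, c α * ∑ μ, ∑ ν, tanProj g F x μ ν * hessF g F α μ ν x

/-- `v` is tangent to the level set `{F = 0}` at `x`. -/
def TangentTo (F : (ι → ℝ) → κ → ℝ) (x v : ι → ℝ) : Prop :=
  ∀ α, ∑ μ, dFm F α μ x * v μ = 0

/-- The normal vector with components `c` in the basis of normals. -/
def NormalComb (g : (ι → ℝ) → Matrix ι ι ℝ) (F : (ι → ℝ) → κ → ℝ) (x : ι → ℝ)
    (c : κ → ℝ) : ι → ℝ :=
  fun μ => ∑ α, c α * normalBasis g F α x μ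

/-- A closed (compact without boundary) spacelike submanifold, given as the regular
zero set of the smooth map `F`, of co-dimension `card κ`. -/
def ClosedSpacelikeSubmanifold (g : (ι → ℝ) → Matrix ι ι ℝ)
    (F : (ι → ℝ) → κ → ℝ) : Prop :=
  (∀ α, ContDiff ℝ (⊤ : ℕ∞) fun x => F x α) ∧
    IsCompact {x | ∀ α, F x α = 0} ∧ {x | ∀ α, F x α = 0}.Nonempty ∧
    (∀ x, (∀ α, F x α = 0) → IsUnit (gram g F x).det) ∧
    (∀ x, (∀ α, F x α = 0) → ∀ v, TangentTo F x v → v ≠ 0 → 0 < sq g x v v)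

/-- Future-trapped: every future-pointing causal normal has negative expansion. -/
def FutureTrapped (g : (ι → ℝ) → Matrix ι ι ℝ) (T : (ι → ℝ) → ι → ℝ)
    (F : (ι → ℝ) → κ → ℝ) : Prop :=
  ∀ x, (∀ α, F x α = 0) → ∀ c : κ → ℝ,
    FutureCausal g T x (NormalComb g F x c) → expansionCoeff g F x c < 0

/-! ### Warped products -/

def basePt {d₁ d₂ : ℕ} (x : (Fin d₁ ⊕ Fin d₂) → ℝ) : Fin d₁ → ℝ :=
  fun a => x (Sum.inl a)

def fibPt {d₁ d₂ : ℕ} (x : (Fin d₁ ⊕ Fin d₂) → ℝ) : Fin d₂ → ℝ :=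
  fun i => x (Sum.inr i)

/-- The warped product metric `g = ĝ + f² ḡ` in adapted coordinates. -/
def warped {d₁ d₂ : ℕ} (gB : (Fin d₁ → ℝ) → Matrix (Fin d₁) (Fin d₁) ℝ)
    (gF : (Fin d₂ → ℝ) → Matrix (Fin d₂) (Fin d₂) ℝ) (f : (Fin d₁ → ℝ) → ℝ) :
    ((Fin d₁ ⊕ Fin d₂) → ℝ) → Matrix (Fin d₁ ⊕ Fin d₂) (Fin d₁ ⊕ Fin d₂) ℝ :=
  fun x => Matrix.of fun μ ν =>
    match μ, ν with
    | Sum.inl a, Sum.inl b => gB (basePt x) a b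
    | Sum.inl _, Sum.inr _ => 0
    | Sum.inr _, Sum.inl _ => 0
    | Sum.inr i, Sum.inr j => (f (basePt x)) ^ 2 * gF (fibPt x) i j

/-- Projection of a spacetime curve to the base. -/
def baseCurve {d₁ d₂ : ℕ} (γ : ℝ → (Fin d₁ ⊕ Fin d₂) → ℝ) : ℝ → Fin d₁ → ℝ :=
  fun u => basePt (γ u)

/-- Projection of a spacetime curve to the fiber. -/
def fibCurve {d₁ d₂ : ℕ} (γ : ℝ → (Fin d₁ ⊕ Fin d₂) → ℝ) : ℝ → Fin d₂ → ℝ :=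
  fun u => fibPt (γ u)

/-- Lift of a base vector to the warped product (vanishing fiber components). -/
def liftVec {d₁ d₂ : ℕ} (v : Fin d₁ → ℝ) : (Fin d₁ ⊕ Fin d₂) → ℝ :=
  fun μ => match μ with
  | Sum.inl a => v a
  | Sum.inr _ => 0

/-- Lift of a base vector field (e.g. a time orientation) to the warped product. -/
def liftT {d₁ d₂ : ℕ} (T : (Fin d₁ → ℝ) → Fin d₁ → ℝ) :
    ((Fin d₁ ⊕ Fin d₂) → ℝ) → (Fin d₁ ⊕ Fin d₂) → ℝ :=
  fun x => liftVec (T (basePt x))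

/-- Defining map of the lift `ζ_p ⊆ Y_p` of the submanifold `{Fb = 0} ⊆ Y`. -/
def liftF {d₁ d₂ m' : ℕ} (p : Fin d₁ → ℝ) (Fb : (Fin d₂ → ℝ) → Fin m' → ℝ) :
    ((Fin d₁ ⊕ Fin d₂) → ℝ) → (Fin d₁ ⊕ Fin m') → ℝ :=
  fun x α => match α with
  | Sum.inl a => x (Sum.inl a) - p a
  | Sum.inr β => Fb (fibPt x) β

/-- Covariant Hessian `∇_μ∇_ν f` of a scalar function. -/
def hess (g : (ι → ℝ) → Matrix ι ι ℝ) (f : (ι → ℝ) → ℝ) (μ ν : ι) (x : ι → ℝ) : ℝ :=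
  pd (fun y => pd f ν y) μ x - ∑ lam, Γc g lam μ ν x * pd f lam x

/-- `∇^μ f ∇_μ f`. -/
def gradSq (g : (ι → ℝ) → Matrix ι ι ℝ) (f : (ι → ℝ) → ℝ) (x : ι → ℝ) : ℝ :=
  ∑ μ, ∑ ν, ginv g x μ ν * pd f μ x * pd f ν x

/-! ### Parametrized submanifolds and their expansions -/

/-- Partial derivative of a parametrization `φ`. -/
def dpar {k : ℕ} (φ : (Fin k → ℝ) → ι → ℝ) (A : Fin k) (μ : ι)
    (y : Fin k → ℝ) : ℝ :=
  fderiv ℝ (fun z => φ z μ) y (Pi.single A 1)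

/-- First fundamental form of a parametrized submanifold. -/
def firstFF {k : ℕ} (g : (ι → ℝ) → Matrix ι ι ℝ) (φ : (Fin k → ℝ) → ι → ℝ)
    (y : Fin k → ℝ) : Matrix (Fin k) (Fin k) ℝ :=
  Matrix.of fun A B => ∑ μ, ∑ ν, g (φ y) μ ν * dpar φ A μ y * dpar φ B ν y

/-- The expansion `θ(n) = n_μ H^μ` of a parametrized submanifold along a normal `n`,
via `θ(n) = −γ^{AB} n_μ (∂_A∂_B φ^μ + Γ^μ_{ρσ} ∂_A φ^ρ ∂_B φ^σ)`. -/
def expansionPar {k : ℕ} (g : (ι → ℝ) → Matrix ι ι ℝ) (φ : (Fin k → ℝ) → ι → ℝ)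
    (y : Fin k → ℝ) (n : ι → ℝ) : ℝ :=
  - ∑ A, ∑ B, (firstFF g φ y)⁻¹ A B *
      ∑ μ, (∑ ν, g (φ y) μ ν * n ν) *
        (fderiv ℝ (fun z => dpar φ B μ z) y (Pi.single A 1)
          + ∑ ρ, ∑ σ, Γc g μ ρ σ (φ y) * dpar φ A ρ y * dpar φ B σ y)

/-- The lift to the warped product of a parametrized submanifold of the fiber,
placed at the base point `p`. -/
def liftPar {d₁ d₂ k : ℕ} (p : Fin d₁ → ℝ) (φF : (Fin k → ℝ) → Fin d₂ → ℝ) :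
    (Fin k → ℝ) → (Fin d₁ ⊕ Fin d₂) → ℝ :=
  fun z μ => match μ with
  | Sum.inl a => p a
  | Sum.inr i => φF z i

/-!
With both indices lowered, the only Christoffel symbols of a warped product with two fiber arguments
are `Γ_{lij} = f² Γ̄_{lij}` and `Γ_{aij} = -f ∂_a f ḡ_{ij}`. The tangent vectors of the lift are
purely vertical, so no other symbols enter its second fundamental form, which is therefore
`f² II̅_{v̄} - f v(f) γ̄`. Since `γ = f² γ̄`, minus its `γ`-trace is `θ̄_{v̄} + k f⁻¹ v(f)`.
-/

section

open scoped Matrix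

section PartialDerivatives

variable {α β : Type*}

lemma pd_const [DecidableEq α] (c : ℝ) (ρ : α) (x : α → ℝ) : pd (fun _ => c) ρ x = 0 := by
  simp [pd]

lemma pd_mul [DecidableEq α] [Finite α] {u h : (α → ℝ) → ℝ} {x : α → ℝ}
    (hu : DifferentiableAt ℝ u x) (hh : DifferentiableAt ℝ h x) (ρ : α) :
    pd (fun z => u z * h z) ρ x = u x * pd h ρ x + h x * pd u ρ x := by
  cases nonempty_fintype α
  simp [pd, fderiv_fun_mul hu hh]

lemma pd_sq [DecidableEq α] [Finite α] {u : (α → ℝ) → ℝ} {x : α → ℝ}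
    (hu : DifferentiableAt ℝ u x) (ρ : α) :
    pd (fun z => u z ^ 2) ρ x = 2 * u x * pd u ρ x := by
  cases nonempty_fintype α
  simp [pd, fderiv_fun_pow 2 hu]

lemma hasFDerivAt_reindex [Finite α] [Finite β] {h : (β → ℝ) → ℝ} (e : β → α) {x : α → ℝ}
    (hh : DifferentiableAt ℝ h (x ∘ e)) :
    HasFDerivAt (fun z : α → ℝ => h (z ∘ e))
      ((fderiv ℝ h (x ∘ e)).comp
        (ContinuousLinearMap.pi fun i => ContinuousLinearMap.proj (e i))) x := by
  cases nonempty_fintype α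
  cases nonempty_fintype β
  have reindex_deriv : HasFDerivAt (fun z : α → ℝ => z ∘ e)
      (ContinuousLinearMap.pi fun i => ContinuousLinearMap.proj (R := ℝ) (e i)) x :=
    hasFDerivAt_pi.2 fun i => hasFDerivAt_apply (e i) x
  exact hh.hasFDerivAt.comp x reindex_deriv

lemma pd_reindex [DecidableEq α] [Finite α] [Finite β] {h : (β → ℝ) → ℝ} (e : β → α) {x : α → ℝ}
    (hh : DifferentiableAt ℝ h (x ∘ e)) (μ : α) :
    pd (fun z => h (z ∘ e)) μ x = fderiv ℝ h (x ∘ e) (Pi.single μ 1 ∘ e) := by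
  rw [pd, (hasFDerivAt_reindex e hh).fderiv]
  rfl

lemma pd_reindex_of_injective [DecidableEq α] [DecidableEq β] [Finite α] [Finite β]
    {h : (β → ℝ) → ℝ} {e : β → α} (he : Function.Injective e) {x : α → ℝ}
    (hh : DifferentiableAt ℝ h (x ∘ e)) (i : β) :
    pd (fun z => h (z ∘ e)) (e i) x = pd h i (x ∘ e) := by
  rw [pd_reindex e hh, pd, Pi.single, Function.update_comp_eq_of_injective _ he]
  rfl

lemma pd_reindex_of_notMem_range [DecidableEq α] [Finite α] [Finite β] {h : (β → ℝ) → ℝ}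
    {e : β → α} {μ : α} (hμ : μ ∉ Set.range e) {x : α → ℝ} (hh : DifferentiableAt ℝ h (x ∘ e)) :
    pd (fun z => h (z ∘ e)) μ x = 0 := by
  rw [pd_reindex e hh, Pi.single, Function.update_comp_eq_of_notMem_range _ _ hμ]
  exact map_zero _

end PartialDerivatives

section ChristoffelFirst

/-- The Christoffel symbols of the first kind, `Γ_{νρσ} = g_{νμ} Γ^μ_{ρσ}`; the lowered index comes
first. -/
def christoffelFirst (g : (ι → ℝ) → Matrix ι ι ℝ) (ν ρ σ : ι) (x : ι → ℝ) : ℝ :=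
  (1 / 2) *
    (pd (fun y => g y ν σ) ρ x + pd (fun y => g y ν ρ) σ x - pd (fun y => g y ρ σ) ν x)

variable (g : (ι → ℝ) → Matrix ι ι ℝ)

lemma Γc_eq_inv_mulVec_christoffelFirst (ρ σ : ι) (x : ι → ℝ) :
    (fun μ => Γc g μ ρ σ x) = (g x)⁻¹ *ᵥ fun ν => christoffelFirst g ν ρ σ x := by
  ext μ
  simp only [Γc, ginv, christoffelFirst, Matrix.mulVec, dotProduct, Finset.mul_sum]
  exact Finset.sum_congr rfl fun ν _ => by ring

lemma mulVec_dotProduct_Γc {x : ι → ℝ} (hs : (g x).IsSymm) (hu : IsUnit (g x).det)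
    (v : ι → ℝ) (ρ σ : ι) :
    (g x *ᵥ v) ⬝ᵥ (fun μ => Γc g μ ρ σ x) = v ⬝ᵥ fun ν => christoffelFirst g ν ρ σ x := by
  rw [Γc_eq_inv_mulVec_christoffelFirst, dotProduct_comm, ← Matrix.dotProduct_transpose_mulVec,
    hs.eq, Matrix.mulVec_mulVec, Matrix.mul_nonsing_inv _ hu, Matrix.one_mulVec]

end ChristoffelFirst

lemma SmoothMetric.isSymm {g : (ι → ℝ) → Matrix ι ι ℝ} (hg : SmoothMetric g) (x : ι → ℝ) :
    (g x).IsSymm :=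
  Matrix.IsSymm.ext fun μ ν => hg.2.1 x ν μ

lemma SmoothMetric.differentiableAt {g : (ι → ℝ) → Matrix ι ι ℝ} (hg : SmoothMetric g) (μ ν : ι)
    (x : ι → ℝ) : DifferentiableAt ℝ (fun z => g z μ ν) x :=
  ((hg.1 μ ν).differentiable (by simp)).differentiableAt

section SecondFundamentalForm

/-- The second fundamental form `II_v(A, B) = g(v, ∇_A ∂_B φ)` of the parametrized submanifold `φ`
along `v`, so that the expansion along `v` is minus its trace. -/
def secondFF {k : ℕ} (g : (ι → ℝ) → Matrix ι ι ℝ) (φ : (Fin k → ℝ) → ι → ℝ) (y : Fin k → ℝ)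
    (v : ι → ℝ) : Matrix (Fin k) (Fin k) ℝ :=
  Matrix.of fun A B => (g (φ y) *ᵥ v) ⬝ᵥ fun μ =>
    fderiv ℝ (fun z => dpar φ B μ z) y (Pi.single A 1)
      + ∑ ρ, ∑ σ, Γc g μ ρ σ (φ y) * dpar φ A ρ y * dpar φ B σ y

variable {k : ℕ} (g : (ι → ℝ) → Matrix ι ι ℝ) (φ : (Fin k → ℝ) → ι → ℝ) (y : Fin k → ℝ)

lemma expansionPar_eq_neg_trace (v : ι → ℝ) :
    expansionPar g φ y v = -((firstFF g φ y)⁻¹ * (secondFF g φ y v)ᵀ).trace :=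
  rfl

omit [DecidableEq ι] in
lemma firstFF_isSymm (hs : (g (φ y)).IsSymm) : (firstFF g φ y).IsSymm := by
  ext A B
  simp only [Matrix.transpose_apply, firstFF, Matrix.of_apply]
  rw [Finset.sum_comm]
  refine Finset.sum_congr rfl fun μ _ => Finset.sum_congr rfl fun ν _ => ?_
  rw [hs.apply μ ν]
  ring

lemma secondFF_apply_eq_christoffelFirst (hs : (g (φ y)).IsSymm) (hu : IsUnit (g (φ y)).det)
    (v : ι → ℝ) (A B : Fin k) :
    secondFF g φ y v A B
      = (g (φ y) *ᵥ v) ⬝ᵥ (fun μ => fderiv ℝ (fun z => dpar φ B μ z) y (Pi.single A 1))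
        + ∑ ρ, ∑ σ, (v ⬝ᵥ fun ν => christoffelFirst g ν ρ σ (φ y))
            * dpar φ A ρ y * dpar φ B σ y := by
  simp only [← mulVec_dotProduct_Γc g hs hu]
  simp only [secondFF, Matrix.of_apply, dotProduct, mul_add,
    Finset.sum_add_distrib, Finset.mul_sum, Finset.sum_mul]
  congr 1
  rw [Finset.sum_comm]
  refine Finset.sum_congr rfl fun ρ _ => ?_
  rw [Finset.sum_comm]
  exact Finset.sum_congr rfl fun σ _ => Finset.sum_congr rfl fun μ _ => by ring

end SecondFundamentalForm

section WarpedProduct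

variable {d₁ d₂ : ℕ} (gB : (Fin d₁ → ℝ) → Matrix (Fin d₁) (Fin d₁) ℝ)
  (gF : (Fin d₂ → ℝ) → Matrix (Fin d₂) (Fin d₂) ℝ) {f : (Fin d₁ → ℝ) → ℝ}
  {x : (Fin d₁ ⊕ Fin d₂) → ℝ}

lemma pd_sq_basePt_mul_fibPt_inl {h : (Fin d₂ → ℝ) → ℝ} (hf : DifferentiableAt ℝ f (basePt x))
    (hh : DifferentiableAt ℝ h (fibPt x)) (a : Fin d₁) :
    pd (fun z : (Fin d₁ ⊕ Fin d₂) → ℝ => f (basePt z) ^ 2 * h (fibPt z)) (Sum.inl a) x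
      = 2 * f (basePt x) * pd f a (basePt x) * h (fibPt x) := by
  have hf' : DifferentiableAt ℝ (fun z : (Fin d₁ ⊕ Fin d₂) → ℝ => f (basePt z)) x :=
    (hasFDerivAt_reindex Sum.inl hf).differentiableAt
  have hh' : DifferentiableAt ℝ (fun z : (Fin d₁ ⊕ Fin d₂) → ℝ => h (fibPt z)) x :=
    (hasFDerivAt_reindex Sum.inr hh).differentiableAt
  have base_deriv : pd (fun z : (Fin d₁ ⊕ Fin d₂) → ℝ => f (basePt z)) (Sum.inl a) x
      = pd f a (basePt x) := pd_reindex_of_injective Sum.inl_injective hf a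
  have fiber_deriv : pd (fun z : (Fin d₁ ⊕ Fin d₂) → ℝ => h (fibPt z)) (Sum.inl a) x = 0 :=
    pd_reindex_of_notMem_range (by simp) hh
  rw [pd_mul (hf'.fun_pow 2) hh', fiber_deriv, pd_sq hf', base_deriv]
  ring

lemma pd_sq_basePt_mul_fibPt_inr {h : (Fin d₂ → ℝ) → ℝ} (hf : DifferentiableAt ℝ f (basePt x))
    (hh : DifferentiableAt ℝ h (fibPt x)) (i : Fin d₂) :
    pd (fun z : (Fin d₁ ⊕ Fin d₂) → ℝ => f (basePt z) ^ 2 * h (fibPt z)) (Sum.inr i) x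
      = f (basePt x) ^ 2 * pd h i (fibPt x) := by
  have hf' : DifferentiableAt ℝ (fun z : (Fin d₁ ⊕ Fin d₂) → ℝ => f (basePt z)) x :=
    (hasFDerivAt_reindex Sum.inl hf).differentiableAt
  have hh' : DifferentiableAt ℝ (fun z : (Fin d₁ ⊕ Fin d₂) → ℝ => h (fibPt z)) x :=
    (hasFDerivAt_reindex Sum.inr hh).differentiableAt
  have base_deriv : pd (fun z : (Fin d₁ ⊕ Fin d₂) → ℝ => f (basePt z)) (Sum.inr i) x = 0 :=
    pd_reindex_of_notMem_range (by simp) hf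
  have fiber_deriv : pd (fun z : (Fin d₁ ⊕ Fin d₂) → ℝ => h (fibPt z)) (Sum.inr i) x
      = pd h i (fibPt x) := pd_reindex_of_injective Sum.inr_injective hh i
  rw [pd_mul (hf'.fun_pow 2) hh', fiber_deriv, pd_sq hf', base_deriv]
  ring

lemma warped_eq_fromBlocks (f : (Fin d₁ → ℝ) → ℝ) (x : (Fin d₁ ⊕ Fin d₂) → ℝ) :
    warped gB gF f x
      = Matrix.fromBlocks (gB (basePt x)) 0 0 (f (basePt x) ^ 2 • gF (fibPt x)) := by
  ext (a | i) (b | j) <;> rfl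

variable {gB gF} in
lemma warped_isSymm (hB : (gB (basePt x)).IsSymm) (hF : (gF (fibPt x)).IsSymm) :
    (warped gB gF f x).IsSymm := by
  rw [warped_eq_fromBlocks]
  exact hB.fromBlocks Matrix.transpose_zero (hF.smul _)

variable {gB gF} in
lemma isUnit_det_warped (hB : IsUnit (gB (basePt x)).det) (hF : IsUnit (gF (fibPt x)).det)
    (hf : f (basePt x) ≠ 0) : IsUnit (warped gB gF f x).det := by
  rw [warped_eq_fromBlocks, Matrix.det_fromBlocks_zero₂₁, Matrix.det_smul]
  exact hB.mul (((pow_ne_zero _ (pow_ne_zero _ hf)).isUnit).mul hF)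

lemma warped_mulVec_dotProduct_of_vertical (f : (Fin d₁ → ℝ) → ℝ) (x v : (Fin d₁ ⊕ Fin d₂) → ℝ)
    {w : (Fin d₁ ⊕ Fin d₂) → ℝ} (hw : ∀ a, w (Sum.inl a) = 0) :
    (warped gB gF f x *ᵥ v) ⬝ᵥ w = f (basePt x) ^ 2 * ((gF (fibPt x) *ᵥ fibPt v) ⬝ᵥ fibPt w) := by
  simp only [Matrix.mulVec, dotProduct, Fintype.sum_sum_type, hw, warped, Matrix.of_apply,
    mul_zero, zero_mul, Finset.sum_const_zero, zero_add, Finset.mul_sum, mul_assoc, fibPt,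
    Finset.sum_mul]

lemma christoffelFirst_warped_inl (hf : DifferentiableAt ℝ f (basePt x))
    (a : Fin d₁) {i j : Fin d₂} (hg : DifferentiableAt ℝ (fun z => gF z i j) (fibPt x)) :
    christoffelFirst (warped gB gF f) (Sum.inl a) (Sum.inr i) (Sum.inr j) x
      = -(f (basePt x) * pd f a (basePt x) * gF (fibPt x) i j) := by
  simp only [christoffelFirst, warped, Matrix.of_apply, pd_const,
    pd_sq_basePt_mul_fibPt_inl hf hg]
  ring

lemma christoffelFirst_warped_inr (hf : DifferentiableAt ℝ f (basePt x))
    (hg : ∀ i j, DifferentiableAt ℝ (fun z => gF z i j) (fibPt x)) (l i j : Fin d₂) :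
    christoffelFirst (warped gB gF f) (Sum.inr l) (Sum.inr i) (Sum.inr j) x
      = f (basePt x) ^ 2 * christoffelFirst gF l i j (fibPt x) := by
  simp only [christoffelFirst, warped, Matrix.of_apply, pd_sq_basePt_mul_fibPt_inr hf (hg _ _)]
  ring

lemma dotProduct_christoffelFirst_warped (hf : DifferentiableAt ℝ f (basePt x))
    (hg : ∀ i j, DifferentiableAt ℝ (fun z => gF z i j) (fibPt x))
    (v : (Fin d₁ ⊕ Fin d₂) → ℝ) (i j : Fin d₂) :
    (v ⬝ᵥ fun ν => christoffelFirst (warped gB gF f) ν (Sum.inr i) (Sum.inr j) x)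
      = f (basePt x) ^ 2 * (fibPt v ⬝ᵥ fun l => christoffelFirst gF l i j (fibPt x))
        - f (basePt x) * (∑ a, v (Sum.inl a) * pd f a (basePt x)) * gF (fibPt x) i j := by
  simp only [dotProduct, Fintype.sum_sum_type, christoffelFirst_warped_inl gB gF hf _ (hg _ _),
    christoffelFirst_warped_inr gB gF hf hg, Finset.mul_sum, Finset.sum_mul, fibPt]
  rw [add_comm, sub_eq_add_neg, ← Finset.sum_neg_distrib]
  congr 1 <;> exact Finset.sum_congr rfl fun _ _ => by ring

end WarpedProduct

section Lift

variable {d₁ d₂ k : ℕ}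

lemma dpar_liftPar_inl (p : Fin d₁ → ℝ) (φF : (Fin k → ℝ) → Fin d₂ → ℝ) (A : Fin k) (a : Fin d₁)
    (y : Fin k → ℝ) : dpar (liftPar p φF) A (Sum.inl a) y = 0 := by
  simp [dpar, liftPar]

lemma dpar_liftPar_inr (p : Fin d₁ → ℝ) (φF : (Fin k → ℝ) → Fin d₂ → ℝ) (A : Fin k) (i : Fin d₂)
    (y : Fin k → ℝ) : dpar (liftPar p φF) A (Sum.inr i) y = dpar φF A i y :=
  rfl

variable (gB : (Fin d₁ → ℝ) → Matrix (Fin d₁) (Fin d₁) ℝ)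
  (gF : (Fin d₂ → ℝ) → Matrix (Fin d₂) (Fin d₂) ℝ) {f : (Fin d₁ → ℝ) → ℝ}
  {p : Fin d₁ → ℝ} (φF : (Fin k → ℝ) → Fin d₂ → ℝ) (y : Fin k → ℝ)

lemma firstFF_warped_liftPar (f : (Fin d₁ → ℝ) → ℝ) (p : Fin d₁ → ℝ) :
    firstFF (warped gB gF f) (liftPar p φF) y = f p ^ 2 • firstFF gF φF y := by
  ext A B
  simp only [firstFF, Matrix.of_apply, Matrix.smul_apply, Fintype.sum_sum_type, dpar_liftPar_inl,
    dpar_liftPar_inr, mul_zero, zero_mul, Finset.sum_const_zero, zero_add, smul_eq_mul,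
    Finset.mul_sum, ← mul_assoc]
  rfl

lemma sum_christoffelFirst_warped_liftPar (hf : DifferentiableAt ℝ f p)
    (hg : ∀ i j, DifferentiableAt ℝ (fun z => gF z i j) (φF y)) (v : (Fin d₁ ⊕ Fin d₂) → ℝ)
    (A B : Fin k) :
    ∑ ρ, ∑ σ, (v ⬝ᵥ fun ν => christoffelFirst (warped gB gF f) ν ρ σ (liftPar p φF y))
        * dpar (liftPar p φF) A ρ y * dpar (liftPar p φF) B σ y
      = f p ^ 2 * ∑ i, ∑ j, (fibPt v ⬝ᵥ fun l => christoffelFirst gF l i j (φF y))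
          * dpar φF A i y * dpar φF B j y
        - f p * (∑ a, v (Sum.inl a) * pd f a p) * firstFF gF φF y A B := by
  have christoffel (i j : Fin d₂) :
      (v ⬝ᵥ fun ν =>
          christoffelFirst (warped gB gF f) ν (Sum.inr i) (Sum.inr j) (liftPar p φF y))
        = f p ^ 2 * (fibPt v ⬝ᵥ fun l => christoffelFirst gF l i j (φF y))
          - f p * (∑ a, v (Sum.inl a) * pd f a p) * gF (φF y) i j :=
    dotProduct_christoffelFirst_warped gB gF (x := liftPar p φF y) hf hg v i j
  simp only [Fintype.sum_sum_type, dpar_liftPar_inl, dpar_liftPar_inr, christoffel, mul_zero,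
    zero_mul, Finset.sum_const_zero, zero_add, firstFF, Matrix.of_apply]
  simp only [sub_mul, Finset.sum_sub_distrib, Finset.mul_sum, mul_assoc]

variable {gB gF} in
lemma secondFF_warped_liftPar (hB : SmoothMetric gB) (hF : SmoothMetric gF)
    (hf : DifferentiableAt ℝ f p) (hfp : f p ≠ 0) (v : (Fin d₁ ⊕ Fin d₂) → ℝ) :
    secondFF (warped gB gF f) (liftPar p φF) y v
      = f p ^ 2 • secondFF gF φF y (fibPt v)
        - (f p * ∑ a, v (Sum.inl a) * pd f a p) • firstFF gF φF y := by
  ext A B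
  have acceleration_term :
      (warped gB gF f (liftPar p φF y) *ᵥ v) ⬝ᵥ
          (fun μ => fderiv ℝ (fun z => dpar (liftPar p φF) B μ z) y (Pi.single A 1))
        = f p ^ 2 * ((gF (φF y) *ᵥ fibPt v) ⬝ᵥ
            fun i => fderiv ℝ (fun z => dpar φF B i z) y (Pi.single A 1)) :=
    warped_mulVec_dotProduct_of_vertical gB gF f _ v fun a => by simp [dpar_liftPar_inl]
  rw [secondFF_apply_eq_christoffelFirst _ _ _ (warped_isSymm (hB.isSymm _) (hF.isSymm _))
    (isUnit_det_warped (hB.2.2 _) (hF.2.2 _) hfp), acceleration_term,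
    sum_christoffelFirst_warped_liftPar gB gF φF y hf fun i j => hF.differentiableAt i j _,
    Matrix.sub_apply, Matrix.smul_apply, Matrix.smul_apply,
    secondFF_apply_eq_christoffelFirst _ _ _ (hF.isSymm _) (hF.2.2 _), smul_eq_mul, smul_eq_mul]
  ring

end Lift

theorem expansion_of_lifted_submanifold_general {d₁ d₂ k : ℕ}
    {gB : (Fin d₁ → ℝ) → Matrix (Fin d₁) (Fin d₁) ℝ}
    {gF : (Fin d₂ → ℝ) → Matrix (Fin d₂) (Fin d₂) ℝ} {f : (Fin d₁ → ℝ) → ℝ}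
    (hB : SmoothMetric gB) (hF : SmoothMetric gF) {p : Fin d₁ → ℝ}
    (hf : DifferentiableAt ℝ f p) (hfp : f p ≠ 0)
    {φF : (Fin k → ℝ) → Fin d₂ → ℝ} {y : Fin k → ℝ}
    (_hφ : ∀ i, ContDiffAt ℝ 2 (fun z => φF z i) y)
    (hreg : IsUnit (firstFF gF φF y).det) (v : (Fin d₁ ⊕ Fin d₂) → ℝ) :
    expansionPar (warped gB gF f) (liftPar p φF) y v
      = expansionPar gF φF y (fibPt v)
        + (k : ℝ) * (f p)⁻¹ * ∑ a, v (Sum.inl a) * pd f a p := by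
  have firstFF_symm : (firstFF gF φF y).IsSymm :=
    firstFF_isSymm gF φF y (hF.isSymm _)
  have inv_firstFF : (f p ^ 2 • firstFF gF φF y)⁻¹ = (f p ^ 2)⁻¹ • (firstFF gF φF y)⁻¹ :=
    Matrix.inv_smul' _ (Units.mk0 (f p ^ 2) (pow_ne_zero 2 hfp)) hreg
  simp only [expansionPar_eq_neg_trace, firstFF_warped_liftPar,
    secondFF_warped_liftPar φF y hB hF hf hfp, inv_firstFF, Matrix.transpose_sub,
    Matrix.transpose_smul, firstFF_symm.eq, Matrix.mul_sub, Matrix.smul_mul, Matrix.mul_smul,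
    Matrix.nonsing_inv_mul _ hreg, Matrix.trace_sub, Matrix.trace_smul, Matrix.trace_one,
    Fintype.card_fin, smul_eq_mul]
  field_simp
  ring

end

/-- For (the lift of) a compact submanifold `ζ_p ⊆ Y_p` of
co-dimension `m` in `M = M₄ ×_f Y` and a future-pointing normal `n = (n^a, n^i)`
at a point of `ζ_p`, the expansion satisfies
`θ(n) = θ̄_{n̄} + (D−m) f⁻¹ n^a ∂_a f|_p`. -/
theorem expansion_of_lifted_submanifold {n k m : ℕ} (hkm : k + m = 4 + n)
    (gB : (Fin 4 → ℝ) → Matrix (Fin 4) (Fin 4) ℝ)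
    (gF : (Fin n → ℝ) → Matrix (Fin n) (Fin n) ℝ)
    (f : (Fin 4 → ℝ) → ℝ)
    (hB : Lorentzian gB) (hF : Riemannian gF)
    (hf : ContDiff ℝ (⊤ : ℕ∞) f) (hfpos : ∀ y, 0 < f y)
    (Th : (Fin 4 → ℝ) → Fin 4 → ℝ) (hT : TimeOrientation gB Th)
    (p : Fin 4 → ℝ)
    (φF : (Fin k → ℝ) → Fin n → ℝ)
    (hφs : ∀ i, ContDiff ℝ (⊤ : ℕ∞) fun z => φF z i)
    (hcomp : IsCompact (Set.range φF))
    (y : Fin k → ℝ)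
    (hreg : (firstFF gF φF y).PosDef)
    (nv : (Fin 4 ⊕ Fin n) → ℝ)
    (hnormal : ∀ A : Fin k,
      ∑ μ, ∑ ν, warped gB gF f (liftPar p φF y) μ ν * nv μ * dpar (liftPar p φF) A ν y = 0)
    (hfuture : sq (warped gB gF f) (liftPar p φF y) (liftT Th (liftPar p φF y)) nv < 0) :
    expansionPar (warped gB gF f) (liftPar p φF) y nv
      = expansionPar gF φF y (fun i => nv (Sum.inr i))
        + (k : ℝ) * (f p)⁻¹ * ∑ a, nv (Sum.inl a) * pd f a p := by
  exact expansion_of_lifted_submanifold_general hB.1 hF.1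
    (hf.differentiable (by simp)).differentiableAt (hfpos p).ne'
    (fun i => ((hφs i).of_le ENat.LEInfty.out).contDiffAt) hreg.det_pos.ne'.isUnit nv

end Paper
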